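/- Let P = {(u_1, u_2) ∈ ℝ² : u_1 ≥ 0, u_1 + u_2 − 1/4 ≥ 0, u_2 ≥ 0, 1 − u_1 − u_2 ≥ 0, 1/2 − u_2 ≥ 0} (the moment polytope of a two-point blowup of ℂP²), with normal vectors v_1 = (1,0), v_2 = (1,1), v_3 = (0,1), v_4 = (−1,−1), v_5 = (0,−1) and l_1(u) = u_1, l_2(u) = u_1 + u_2 − 1/4, l_3(u) = u_2, l_4(u) = 1 − u_1 − u_2, l_5(u) = 1/2 − u_2. Then Trop(P, (1,0)) ∩ Trop(P, (0,1)) ∩ Trop(P, (1,−1)) ∩ Int(P) = {(t, 1/4) : 1/4 ≤ t ≤ 3/8}. -/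

import Mathlib

open scoped Classical

noncomputable section

/-- Integer inner product `⟨w, v⟩ = ∑ i, w i * v i` on `ℤ^n`. -/
def zdot {n : ℕ} (w v : Fin n → ℤ) : ℤ := ∑ i, w i * v i

/-- A lattice vector is primitive if the gcd of its entries is `1`. -/
def Primitive {n : ℕ} (w : Fin n → ℤ) : Prop := Finset.univ.gcd w = 1

/-- The affine function `l_j(u) = ⟨u, v_j⟩ - λ_j`. -/
def lf {n m : ℕ} (v : Fin m → Fin n → ℤ) (lam : Fin m → ℝ) (j : Fin m) (u : Fin n → ℝ) : ℝ :=
  (∑ i, u i * (v j i : ℝ)) - lam j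

/-- The polytope `P = {u : l_j(u) ≥ 0 for all j}`. -/
def Pset {n m : ℕ} (v : Fin m → Fin n → ℤ) (lam : Fin m → ℝ) : Set (Fin n → ℝ) :=
  {u | ∀ j, 0 ≤ lf v lam j u}

/-- The tropicalization of `P` relative to the lattice vector `w`: the set of points at which
the minimum of `{l_j(u) : ⟨w, v_j⟩ ≠ 0}` is attained by at least two distinct indices. -/
def TropRel {n m : ℕ} (v : Fin m → Fin n → ℤ) (lam : Fin m → ℝ) (w : Fin n → ℤ) :
    Set (Fin n → ℝ) :=
  {u | ∃ j₁ j₂ : Fin m, j₁ ≠ j₂ ∧ zdot w (v j₁) ≠ 0 ∧ zdot w (v j₂) ≠ 0 ∧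
        lf v lam j₁ u = lf v lam j₂ u ∧
        ∀ j : Fin m, zdot w (v j) ≠ 0 → lf v lam j₁ u ≤ lf v lam j u}

/-- Normal vectors of the moment polytope of a two-point blowup of `ℂP²`:
`v₁ = (1,0), v₂ = (1,1), v₃ = (0,1), v₄ = (-1,-1), v₅ = (0,-1)`. -/
def vB : Fin 5 → Fin 2 → ℤ := ![![1, 0], ![1, 1], ![0, 1], ![-1, -1], ![0, -1]]

/-- Constants so that `l₁ = u₁, l₂ = u₁ + u₂ - 1/4, l₃ = u₂, l₄ = 1 - u₁ - u₂,
l₅ = 1/2 - u₂`. -/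
def lamB : Fin 5 → ℝ := ![0, 1/4, 0, -1, -1/2]

/-! The vectors `(1, 0)` and `(1, -1)` each pair nontrivially with exactly three normals, so the
corresponding tropicalizations are tropical lines: three rays leaving `(3/8, 1/4)` and `(1/4, 1/4)`
respectively. The two lines have opposite rays on the line `u₂ = 1/4`; these overlap in the segment
between the vertices, and the lines meet nowhere else. On that segment `l₃ = l₅ = 1/4` is the
minimum for `(0, 1)`, and every `l_j` is positive. In code the index of `l_j` is
`j - 1 : Fin 5`. -/

section General

variable {n m : ℕ} {v : Fin m → Fin n → ℤ} {lam : Fin m → ℝ} {w : Fin n → ℤ} {u : Fin n → ℝ}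

theorem continuous_lf (j : Fin m) : Continuous (lf v lam j) := by
  unfold lf
  fun_prop

theorem mem_interior_Pset_of_forall_lf_pos (hu : ∀ j, 0 < lf v lam j u) :
    u ∈ interior (Pset v lam) := by
  have eventually_pos : ∀ᶠ x in nhds u, ∀ j, 0 < lf v lam j x :=
    Filter.eventually_all.2 fun j ↦ (continuous_lf j).continuousAt.eventually_const_lt (hu j)
  exact mem_interior_iff_mem_nhds.2 (eventually_pos.mono fun _ hx j ↦ (hx j).le)

/-- The index set `J_w = {j : ⟨w, v_j⟩ ≠ 0}` over which `TropRel v lam w` takes its minimum, as a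
`Finset` so that it can be evaluated for concrete normals. -/
def activeIndices (v : Fin m → Fin n → ℤ) (w : Fin n → ℤ) : Finset (Fin m) :=
  {j | zdot w (v j) ≠ 0}

theorem mem_TropRel_iff : u ∈ TropRel v lam w ↔
    ∃ j₁ ∈ activeIndices v w, ∃ j₂ ∈ activeIndices v w, j₁ ≠ j₂ ∧
      lf v lam j₁ u = lf v lam j₂ u ∧
      ∀ j ∈ activeIndices v w, lf v lam j₁ u ≤ lf v lam j u := by
  simp only [TropRel, activeIndices, Set.mem_ofPred_eq, Finset.mem_filter_univ]
  grind

theorem mem_TropRel_iff_of_activeIndices_eq_triple {a b c : Fin m}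
    (hab : a ≠ b) (hac : a ≠ c) (hbc : b ≠ c) (hw : activeIndices v w = {a, b, c}) :
    u ∈ TropRel v lam w ↔
      (lf v lam a u = lf v lam b u ∧ lf v lam a u ≤ lf v lam c u) ∨
      (lf v lam a u = lf v lam c u ∧ lf v lam a u ≤ lf v lam b u) ∨
      (lf v lam b u = lf v lam c u ∧ lf v lam b u ≤ lf v lam a u) := by
  simp only [mem_TropRel_iff, hw, Finset.exists_mem_insert, Finset.forall_mem_insert,
    Finset.mem_singleton, exists_eq_left, forall_eq]
  grind

end General

section Blowup

variable {u : Fin 2 → ℝ}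

theorem lf_vB_lamB (j : Fin 5) (u : Fin 2 → ℝ) :
    lf vB lamB j u = ![u 0, u 0 + u 1 - 1 / 4, u 1, 1 - u 0 - u 1, 1 / 2 - u 1] j := by
  fin_cases j <;> simp [lf, vB, lamB] <;> ring

theorem activeIndices_vB_one_zero : activeIndices vB ![1, 0] = {0, 1, 3} := by decide

theorem activeIndices_vB_zero_one : activeIndices vB ![0, 1] = {1, 2, 3, 4} := by decide

theorem activeIndices_vB_one_neg_one : activeIndices vB ![1, -1] = {0, 2, 4} := by decide

theorem mem_TropRel_vB_one_zero_iff : u ∈ TropRel vB lamB ![1, 0] ↔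
    (u 1 = 1 / 4 ∧ u 0 ≤ 3 / 8) ∨ (2 * u 0 + u 1 = 1 ∧ 1 / 4 ≤ u 1) ∨
      (u 0 + u 1 = 5 / 8 ∧ u 1 ≤ 1 / 4) := by
  rw [mem_TropRel_iff_of_activeIndices_eq_triple (by decide) (by decide) (by decide)
    activeIndices_vB_one_zero]
  simp only [lf_vB_lamB, Matrix.cons_val]
  grind

theorem mem_TropRel_vB_one_neg_one_iff : u ∈ TropRel vB lamB ![1, -1] ↔
    (u 0 = u 1 ∧ u 1 ≤ 1 / 4) ∨ (u 0 + u 1 = 1 / 2 ∧ 1 / 4 ≤ u 1) ∨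
      (u 1 = 1 / 4 ∧ 1 / 4 ≤ u 0) := by
  rw [mem_TropRel_iff_of_activeIndices_eq_triple (by decide) (by decide) (by decide)
    activeIndices_vB_one_neg_one]
  simp only [lf_vB_lamB, Matrix.cons_val]
  grind

theorem mem_TropRel_vB_one_zero_inter_one_neg_one_iff :
    u ∈ TropRel vB lamB ![1, 0] ∩ TropRel vB lamB ![1, -1] ↔
      1 / 4 ≤ u 0 ∧ u 0 ≤ 3 / 8 ∧ u 1 = 1 / 4 := by
  rw [Set.mem_inter_iff, mem_TropRel_vB_one_zero_iff, mem_TropRel_vB_one_neg_one_iff]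
  grind

theorem mem_TropRel_vB_zero_one_of_eq_quarter (hlow : 1 / 4 ≤ u 0) (hupp : u 0 ≤ 1 / 2)
    (h1 : u 1 = 1 / 4) : u ∈ TropRel vB lamB ![0, 1] := by
  rw [mem_TropRel_iff, activeIndices_vB_zero_one]
  refine ⟨2, by decide, 4, by decide, by decide, ?_, ?_⟩
  · simp only [lf_vB_lamB, Matrix.cons_val]
    linarith
  · simp only [Finset.forall_mem_insert, Finset.mem_singleton, forall_eq, lf_vB_lamB,
      Matrix.cons_val]
    refine ⟨?_, ?_, ?_, ?_⟩ <;> linarith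

theorem mem_interior_Pset_vB_of_eq_quarter (hlow : 0 < u 0) (hupp : u 0 < 3 / 4)
    (h1 : u 1 = 1 / 4) : u ∈ interior (Pset vB lamB) := by
  refine mem_interior_Pset_of_forall_lf_pos fun j ↦ ?_
  rw [lf_vB_lamB]
  fin_cases j <;> simp only [Fin.reduceFinMk, Fin.zero_eta, Fin.mk_one, Matrix.cons_val] <;>
    linarith

end Blowup

/-- For the moment polytope
`P = {u : u₁ ≥ 0, u₁ + u₂ - 1/4 ≥ 0, u₂ ≥ 0, 1 - u₁ - u₂ ≥ 0, 1/2 - u₂ ≥ 0}` of a two-point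
blowup of `ℂP²`,
`Trop(P,(1,0)) ∩ Trop(P,(0,1)) ∩ Trop(P,(1,-1)) ∩ Int(P) = {(t, 1/4) : 1/4 ≤ t ≤ 3/8}`. -/
theorem statement13 :
    TropRel vB lamB ![1, 0] ∩ TropRel vB lamB ![0, 1] ∩ TropRel vB lamB ![1, -1] ∩
      interior (Pset vB lamB)
    = {u : Fin 2 → ℝ | ∃ t : ℝ, 1/4 ≤ t ∧ t ≤ 3/8 ∧ u = ![t, 1/4]} := by
  ext u
  have mem_segment_iff : (∃ t : ℝ, 1 / 4 ≤ t ∧ t ≤ 3 / 8 ∧ u = ![t, 1 / 4]) ↔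
      1 / 4 ≤ u 0 ∧ u 0 ≤ 3 / 8 ∧ u 1 = 1 / 4 := by
    simp [funext_iff, Fin.forall_fin_two]
  rw [Set.mem_ofPred_eq, mem_segment_iff, ← mem_TropRel_vB_one_zero_inter_one_neg_one_iff]
  refine ⟨fun ⟨⟨⟨h10, _⟩, h1n⟩, _⟩ ↦ ⟨h10, h1n⟩, fun h ↦ ?_⟩
  obtain ⟨hlow, hupp, h1⟩ := mem_TropRel_vB_one_zero_inter_one_neg_one_iff.1 h
  exact ⟨⟨⟨h.1, mem_TropRel_vB_zero_one_of_eq_quarter hlow (by linarith) h1⟩, h.2⟩,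
    mem_interior_Pset_vB_of_eq_quarter (by linarith) (by linarith) h1⟩
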